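/- Let α, β, γ be real numbers with α > -1/2, α + β + γ > -3/2, and γ > −1/2. Define, for t ≥ 1, F(t) = ∫₀¹ s^{2α} (∫ₛ¹ u^β (u−s)^γ du) (∫ₜ^{t+1} v^β (v−s)^γ dv) ds, V(t) = ∫₀^{t+1} s^{2α} (∫_{max(s,t)}^{t+1} u^β (u−s)^γ du)² ds, C = ∫₀¹ s^{2α} (∫ₛ¹ u^β (u−s)^γ du)² ds, and r(t) = F(t) / (√C · √V(t)). Then there exists a constant c > 0 (depending on α, β, γ) such that lim_{t→+∞} t^{α+1/2} r(t) = c. -/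

import Mathlib

open MeasureTheory Filter intervalIntegral

/-- The integral of the Volterra kernel `u ^ β * (u - s) ^ γ` over `[a, b]`. -/
noncomputable def kernelIntegral (β γ a b s : ℝ) : ℝ :=
  ∫ u in a..b, u ^ β * (u - s) ^ γ

lemma stronglyMeasurable_kernelIntegral (β γ : ℝ) {a b : ℝ → ℝ} (ha : Measurable a)
    (hb : Measurable b) :
    StronglyMeasurable fun s => kernelIntegral β γ (a s) (b s) s := by
  have key : ∀ {a b : ℝ → ℝ}, Measurable a → Measurable b → StronglyMeasurable
      fun s => ∫ u in Set.Ioc (a s) (b s), u ^ β * (u - s) ^ γ := by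
    intro a b ha hb
    have : (fun s => ∫ u in Set.Ioc (a s) (b s), u ^ β * (u - s) ^ γ) =
        fun s => ∫ u, Set.indicator {p : ℝ × ℝ | a p.1 < p.2 ∧ p.2 ≤ b p.1}
          (fun p => p.2 ^ β * (p.2 - p.1) ^ γ) (s, u) := by
      funext s
      rw [← MeasureTheory.integral_indicator measurableSet_Ioc]
      rfl
    rw [this]
    apply StronglyMeasurable.integral_prod_right'
    apply Measurable.stronglyMeasurable
    apply Measurable.indicator
    · fun_prop
    · exact (measurableSet_lt (ha.comp measurable_fst) measurable_snd).inter
        (measurableSet_le measurable_snd (hb.comp measurable_fst))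
  exact (key ha hb).sub (key hb ha)

lemma rpow_le_two_rpow_abs {y : ℝ} (b : ℝ) (h1 : 1 / 2 ≤ y) (h2 : y ≤ 2) :
    y ^ b ≤ 2 ^ |b| := by
  have hy : 0 < y := by linarith
  rcases le_total 0 b with hb | hb
  · rw [abs_of_nonneg hb]
    exact Real.rpow_le_rpow hy.le h2 hb
  · rw [abs_of_nonpos hb, Real.rpow_neg (by norm_num), ← Real.inv_rpow (by norm_num)]
    exact Real.rpow_le_rpow_of_nonpos (by norm_num) (by linarith) hb

lemma rpow_le_mul_rpow {t u : ℝ} (b : ℝ) (ht : 1 ≤ t) (h1 : t ≤ u) (h2 : u ≤ t + 1) :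
    u ^ b ≤ 2 ^ |b| * t ^ b := by
  have ht0 : 0 < t := by linarith
  have h := rpow_le_two_rpow_abs (y := u / t) b
    (by rw [le_div_iff₀ ht0]; linarith) (by rw [div_le_iff₀ ht0]; linarith)
  rwa [Real.div_rpow (by linarith) ht0.le, div_le_iff₀ (Real.rpow_pos_of_pos ht0 b)] at h

/-- Mean value form of the rescaled kernel integral over `[t, t + 1]`. -/
lemma exists_rpow_mul_kernelIntegral_eq (β γ : ℝ) {t s : ℝ} (ht : 0 < t) (hs : s < t) :
    ∃ y, 1 ≤ y ∧ y ≤ 1 + 1 / t ∧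
      t ^ (-(β + γ)) * kernelIntegral β γ t (t + 1) s = y ^ β * (y - s / t) ^ γ := by
  have hcont : ContinuousOn (fun u : ℝ => u ^ β * (u - s) ^ γ) (Set.uIcc t (t + 1)) := by
    rw [Set.uIcc_of_le (by linarith)]
    intro u hu
    have hu1 := hu.1
    apply ContinuousAt.continuousWithinAt
    apply ContinuousAt.mul
    · exact Real.continuousAt_rpow_const _ _ (Or.inl (by linarith))
    · exact ContinuousAt.rpow_const (by fun_prop) (Or.inl (by linarith))
  obtain ⟨c, hc, hcv⟩ := exists_eq_interval_average (by linarith : t ≠ t + 1) hcont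
  rw [Set.uIoo_of_le (by linarith)] at hc
  rw [interval_average_eq] at hcv
  have hc1 : t < c := hc.1
  have hc2 : c < t + 1 := hc.2
  refine ⟨c / t, ?_, ?_, ?_⟩
  · rw [le_div_iff₀ ht]; linarith
  · rw [div_le_iff₀ ht]; field_simp; linarith
  · have : kernelIntegral β γ t (t + 1) s = c ^ β * (c - s) ^ γ := by
      rw [hcv]; simp [kernelIntegral]
    rw [this, div_sub_div_same, Real.div_rpow (by linarith) ht.le,
      Real.div_rpow (by linarith) ht.le, Real.rpow_neg ht.le, Real.rpow_add ht]
    have := Real.rpow_pos_of_pos ht β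
    have := Real.rpow_pos_of_pos ht γ
    field_simp

lemma tendsto_rpow_mul_kernelIntegral (β γ : ℝ) {σ : ℝ → ℝ} {x : ℝ} (hx : x < 1)
    (hσ : Tendsto (fun t => σ t / t) atTop (nhds x)) (hlt : ∀ᶠ t in atTop, σ t < t) :
    Tendsto (fun t => t ^ (-(β + γ)) * kernelIntegral β γ t (t + 1) (σ t)) atTop
      (nhds ((1 - x) ^ γ)) := by
  have hex : ∀ t, ∃ y, 0 < t → σ t < t → (1 ≤ y ∧ y ≤ 1 + 1 / t ∧
      t ^ (-(β + γ)) * kernelIntegral β γ t (t + 1) (σ t) = y ^ β * (y - σ t / t) ^ γ) := by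
    intro t
    by_cases h : 0 < t ∧ σ t < t
    · obtain ⟨y, hy⟩ := exists_rpow_mul_kernelIntegral_eq β γ h.1 h.2
      exact ⟨y, fun _ _ => hy⟩
    · exact ⟨0, fun h1 h2 => absurd ⟨h1, h2⟩ h⟩
  choose y hy using hex
  have hy1 : Tendsto y atTop (nhds 1) := by
    have h1 : Tendsto (fun t : ℝ => 1 + 1 / t) atTop (nhds 1) := by
      simpa using (tendsto_inv_atTop_zero (𝕜 := ℝ)).const_add 1
    refine tendsto_of_tendsto_of_tendsto_of_le_of_le' tendsto_const_nhds h1 ?_ ?_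
    · filter_upwards [eventually_gt_atTop 0, hlt] with t h0 h using (hy t h0 h).1
    · filter_upwards [eventually_gt_atTop 0, hlt] with t h0 h using (hy t h0 h).2.1
  have hlim : Tendsto (fun t => y t ^ β * (y t - σ t / t) ^ γ) atTop
      (nhds (1 ^ β * (1 - x) ^ γ)) :=
    (hy1.rpow_const (Or.inl one_ne_zero)).mul
      ((hy1.sub hσ).rpow_const (Or.inl (by linarith)))
  rw [Real.one_rpow, one_mul] at hlim
  refine hlim.congr' ?_
  filter_upwards [eventually_gt_atTop 0, hlt] with t h0 h using (hy t h0 h).2.2.symm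

lemma intervalIntegrable_rpow_mul_one_sub_rpow {a b : ℝ} (ha : -1 < a) (hb : -1 < b) :
    IntervalIntegrable (fun x : ℝ => x ^ a * (1 - x) ^ b) volume 0 1 := by
  have h := (Complex.betaIntegral_convergent (u := ((a + 1 : ℝ) : ℂ)) (v := ((b + 1 : ℝ) : ℂ))
    (by simp; linarith) (by simp; linarith)).norm
  refine h.congr_ae ?_
  rw [Set.uIoc_of_le zero_le_one]
  refine (ae_restrict_iff' measurableSet_Ioc).2 ?_
  filter_upwards [Measure.ae_ne volume (1 : ℝ)] with x hx1 hx
  have hx0 : 0 < x := hx.1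
  have hx1' : 0 < 1 - x := by
    have := lt_of_le_of_ne hx.2 hx1
    linarith
  have e : (1 : ℂ) - (x : ℂ) = ((1 - x : ℝ) : ℂ) := by push_cast; ring
  rw [norm_mul, e, Complex.norm_cpow_eq_rpow_re_of_pos hx0,
    Complex.norm_cpow_eq_rpow_re_of_pos hx1']
  simp

/-- A majorant of the kernel on `(s, 1)`. -/
lemma rpow_mul_rpow_sub_le {β γ θ η s u : ℝ} (hη : η ≤ γ + 1) (hθ : 0 ≤ θ)
    (hθη : η - (β + γ + 1) ≤ θ) (hs : 0 < s) (hsu : s < u) (hu : u ≤ 1) :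
    u ^ β * (u - s) ^ γ ≤ s ^ (-θ) * (u - s) ^ (η - 1) := by
  have hu0 : 0 < u := hs.trans hsu
  have hus : 0 < u - s := sub_pos.2 hsu
  calc u ^ β * (u - s) ^ γ ≤ (u ^ (-θ) * u ^ (η - 1 - γ)) * (u - s) ^ γ := by
        gcongr
        rw [← Real.rpow_add hu0]
        exact Real.rpow_le_rpow_of_exponent_ge hu0 hu (by linarith)
    _ ≤ (s ^ (-θ) * (u - s) ^ (η - 1 - γ)) * (u - s) ^ γ := by
        gcongr ?_ * ?_ * _
        · exact Real.rpow_le_rpow_of_nonpos hs hsu.le (by linarith)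
        · exact Real.rpow_le_rpow_of_nonpos hus (by linarith) (by linarith)
    _ = s ^ (-θ) * (u - s) ^ (η - 1) := by
        rw [mul_assoc, ← Real.rpow_add hus]
        ring_nf

lemma intervalIntegrable_sub_rpow (a b s : ℝ) {p : ℝ} (hp : -1 < p) :
    IntervalIntegrable (fun u => (u - s) ^ p) volume a b := by
  have h := (intervalIntegrable_rpow' (a := a - s) (b := b - s) hp).comp_sub_right s
  simpa using h

lemma integral_sub_rpow (s b : ℝ) {p : ℝ} (hp : -1 < p) :
    ∫ u in s..b, (u - s) ^ p = (b - s) ^ (p + 1) / (p + 1) := by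
  rw [integral_comp_sub_right (fun x => x ^ p) s, integral_rpow (Or.inl hp), sub_self,
    Real.zero_rpow (by linarith), sub_zero]

lemma abs_kernelIntegral_one_le {β γ θ η s : ℝ} (hη0 : 0 < η) (hη : η ≤ γ + 1) (hθ : 0 ≤ θ)
    (hθη : η - (β + γ + 1) ≤ θ) (hs : 0 < s) (hs1 : s ≤ 1) :
    |kernelIntegral β γ s 1 s| ≤ s ^ (-θ) / η := by
  have h := norm_integral_le_of_norm_le (μ := volume) (f := fun u => u ^ β * (u - s) ^ γ)
    (g := fun u => s ^ (-θ) * (u - s) ^ (η - 1)) hs1 (Eventually.of_forall fun u hu => by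
      have h0 : 0 < u := hs.trans hu.1
      have h1 : 0 < u - s := sub_pos.2 hu.1
      rw [Real.norm_of_nonneg (by positivity)]
      exact rpow_mul_rpow_sub_le hη hθ hθη hs hu.1 hu.2)
    ((intervalIntegrable_sub_rpow s 1 s (by linarith)).const_mul _)
  rw [intervalIntegral.integral_const_mul, integral_sub_rpow s 1 (by linarith)] at h
  refine h.trans ?_
  rw [sub_add_cancel, div_eq_mul_inv, div_eq_mul_inv]
  gcongr
  have : (1 - s) ^ η ≤ 1 := Real.rpow_le_one (by linarith) (by linarith) hη0.le
  have h2 : 0 < η⁻¹ := by positivity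
  nlinarith

lemma kernelIntegral_pos {β γ a b s : ℝ} (hγ : -1 < γ) (hs : 0 < s) (hsa : s ≤ a)
    (hab : a < b) : 0 < kernelIntegral β γ a b s := by
  apply intervalIntegral_pos_of_pos_on _ _ hab
  · refine (intervalIntegrable_sub_rpow a b s hγ).continuousOn_mul ?_
    rw [Set.uIcc_of_le hab.le]
    intro u hu
    have := hu.1
    exact (Real.continuousAt_rpow_const _ _ (Or.inl (by linarith))).continuousWithinAt
  · intro u hu
    have := hu.1
    exact mul_pos (Real.rpow_pos_of_pos (by linarith) _) (Real.rpow_pos_of_pos (by linarith) _)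

lemma intervalIntegrable_rpow_mul_kernelIntegral_one_sq {α β γ : ℝ} (hα : -(1 / 2 : ℝ) < α)
    (hαβγ : -(3 / 2 : ℝ) < α + β + γ) (hγ : -1 < γ) :
    IntervalIntegrable (fun s => s ^ (2 * α) * kernelIntegral β γ s 1 s ^ 2) volume 0 1 := by
  obtain ⟨η, hη0, hη, hη2⟩ : ∃ η, 0 < η ∧ η ≤ γ + 1 ∧ η < α + β + γ + 3 / 2 :=
    ⟨min (γ + 1) ((α + β + γ + 3 / 2) / 2), lt_min (by linarith) (by linarith),
      min_le_left _ _, (min_le_right _ _).trans_lt (by linarith)⟩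
  obtain ⟨θ, hθ0, hθη, hθ⟩ : ∃ θ, 0 ≤ θ ∧ η - (β + γ + 1) ≤ θ ∧ θ < α + 1 / 2 :=
    ⟨max 0 (η - (β + γ + 1)), le_max_left _ _, le_max_right _ _,
      max_lt (by linarith) (by linarith)⟩
  have hb : IntervalIntegrable (fun s : ℝ => (1 / η) ^ 2 * s ^ (2 * α - 2 * θ)) volume 0 1 :=
    (intervalIntegrable_rpow' (by linarith)).const_mul _
  refine hb.mono_fun' ?_ ?_
  · exact ((measurable_id.pow_const (2 * α)).stronglyMeasurable.mul
      ((stronglyMeasurable_kernelIntegral β γ measurable_id measurable_const).pow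
        2)).aestronglyMeasurable
  · rw [Set.uIoc_of_le zero_le_one]
    refine (ae_restrict_iff' measurableSet_Ioc).2 (Eventually.of_forall fun s hs => ?_)
    have hs0 : 0 < s := hs.1
    have h := abs_kernelIntegral_one_le hη0 hη hθ0 hθη hs.1 hs.2
    have hsq : kernelIntegral β γ s 1 s ^ 2 ≤ (s ^ (-θ) / η) ^ 2 := by
      rw [← sq_abs]; gcongr
    dsimp only
    rw [Real.norm_of_nonneg (by positivity)]
    calc s ^ (2 * α) * kernelIntegral β γ s 1 s ^ 2
        ≤ s ^ (2 * α) * (s ^ (-θ) / η) ^ 2 := by gcongr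
      _ = (1 / η) ^ 2 * s ^ (2 * α - 2 * θ) := by
        have e : s ^ (2 * α - 2 * θ) = s ^ (2 * α) * (s ^ (-θ)) ^ 2 := by
          rw [← Real.rpow_natCast (s ^ (-θ)) 2, ← Real.rpow_mul hs0.le, ← Real.rpow_add hs0]
          push_cast
          ring_nf
        rw [e]
        ring

lemma intervalIntegrable_rpow_mul_kernelIntegral_one {α β γ : ℝ} (hα : -(1 / 2 : ℝ) < α)
    (hαβγ : -(3 / 2 : ℝ) < α + β + γ) (hγ : -1 < γ) :
    IntervalIntegrable (fun s => s ^ (2 * α) * kernelIntegral β γ s 1 s) volume 0 1 := by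
  refine ((intervalIntegrable_rpow' (r := 2 * α) (by linarith)).add
    (intervalIntegrable_rpow_mul_kernelIntegral_one_sq hα hαβγ hγ)).mono_fun' ?_ ?_
  · exact ((measurable_id.pow_const (2 * α)).stronglyMeasurable.mul
      (stronglyMeasurable_kernelIntegral β γ measurable_id measurable_const)).aestronglyMeasurable
  · rw [Set.uIoc_of_le zero_le_one]
    refine (ae_restrict_iff' measurableSet_Ioc).2 (Eventually.of_forall fun s hs => ?_)
    have hs0 : 0 < s ^ (2 * α) := Real.rpow_pos_of_pos hs.1 _
    dsimp only
    rw [norm_mul, Real.norm_of_nonneg hs0.le, Real.norm_eq_abs]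
    have : |kernelIntegral β γ s 1 s| ≤ 1 + kernelIntegral β γ s 1 s ^ 2 := by
      rw [← sq_abs]
      nlinarith [sq_nonneg (|kernelIntegral β γ s 1 s| - 1), abs_nonneg (kernelIntegral β γ s 1 s)]
    calc _ ≤ s ^ (2 * α) * (1 + kernelIntegral β γ s 1 s ^ 2) := by gcongr
      _ = _ := by ring

lemma tendsto_rpow_mul_covariance {α β γ : ℝ} (hα : -(1 / 2 : ℝ) < α)
    (hαβγ : -(3 / 2 : ℝ) < α + β + γ) (hγ : -1 < γ) :
    Tendsto (fun t : ℝ => t ^ (-(β + γ)) * ∫ s in (0 : ℝ)..1,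
        s ^ (2 * α) * kernelIntegral β γ s 1 s * kernelIntegral β γ t (t + 1) s) atTop
      (nhds (∫ s in (0 : ℝ)..1, s ^ (2 * α) * kernelIntegral β γ s 1 s)) := by
  simp_rw [← intervalIntegral.integral_const_mul]
  refine intervalIntegral.tendsto_integral_filter_of_dominated_convergence
    (fun s => (2 ^ |β| * 2 ^ |γ|) * ‖s ^ (2 * α) * kernelIntegral β γ s 1 s‖) ?_ ?_ ?_ ?_
  · refine Eventually.of_forall fun t => ?_
    exact ((((measurable_id.pow_const (2 * α)).stronglyMeasurable.mul
      (stronglyMeasurable_kernelIntegral β γ measurable_id measurable_const)).mul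
      (stronglyMeasurable_kernelIntegral β γ measurable_const measurable_const)).const_mul
        _).aestronglyMeasurable
  · filter_upwards [eventually_ge_atTop 2] with t ht
    refine Eventually.of_forall fun s hs => ?_
    rw [Set.uIoc_of_le zero_le_one] at hs
    have hs0 := hs.1
    have hs1 := hs.2
    have ht0 : 0 < t := by linarith
    obtain ⟨y, hy1, hy2, hy⟩ :=
      exists_rpow_mul_kernelIntegral_eq β γ ht0 (by linarith : s < t)
    have hst : s / t ≤ 1 / 2 := by rw [div_le_iff₀ ht0]; linarith
    have hst0 : 0 < s / t := by positivity
    have ht' : 1 / t ≤ 1 := by rw [div_le_iff₀ ht0]; linarith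
    have h1 := rpow_le_two_rpow_abs (y := y) β (by linarith) (by linarith)
    have h2 := rpow_le_two_rpow_abs (y := y - s / t) γ (by linarith) (by linarith)
    have h3 : 0 < y - s / t := by linarith
    rw [mul_left_comm, hy, mul_comm, norm_mul, Real.norm_of_nonneg (by positivity)]
    gcongr
  · exact ((intervalIntegrable_rpow_mul_kernelIntegral_one hα hαβγ hγ).norm).const_mul _
  · refine Eventually.of_forall fun s hs => ?_
    have h := (tendsto_rpow_mul_kernelIntegral β γ (σ := fun _ => s) zero_lt_one
      (tendsto_const_nhds.div_atTop tendsto_id) (eventually_gt_atTop s)).const_mul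
      (s ^ (2 * α) * kernelIntegral β γ s 1 s)
    rw [sub_zero, Real.one_rpow, mul_one] at h
    refine h.congr fun t => ?_
    ring

lemma rpow_mul_kernelIntegral_sq_le {α β γ κ t x : ℝ} (hκ : 0 ≤ κ) (hγκ : 0 ≤ γ + κ) (ht : 1 ≤ t)
    (hx0 : 0 < x) (hx1 : x < 1) :
    ‖x ^ (2 * α) * (t ^ (-(β + γ)) * kernelIntegral β γ t (t + 1) (t * x)) ^ 2‖ ≤
      (2 ^ |β| * 2 ^ (γ + κ)) ^ 2 * (x ^ (2 * α) * (1 - x) ^ (-(2 * κ))) := by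
  have ht0 : 0 < t := by linarith
  have hx1' : 0 < 1 - x := by linarith
  obtain ⟨y, hy1, hy2, hy⟩ := exists_rpow_mul_kernelIntegral_eq β γ ht0
    (by nlinarith : t * x < t)
  have ht' : 1 / t ≤ 1 := by rw [div_le_iff₀ ht0]; linarith
  rw [mul_div_cancel_left₀ _ ht0.ne'] at hy
  have hyx : 0 < y - x := by linarith
  rw [hy, Real.norm_of_nonneg (by positivity)]
  have h1 := rpow_le_two_rpow_abs (y := y) β (by linarith) (by linarith)
  have h2 : (y - x) ^ γ ≤ 2 ^ (γ + κ) * (1 - x) ^ (-κ) := by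
    calc (y - x) ^ γ = (y - x) ^ (γ + κ) * (y - x) ^ (-κ) := by
          rw [← Real.rpow_add hyx]; ring_nf
      _ ≤ 2 ^ (γ + κ) * (1 - x) ^ (-κ) := by
          gcongr ?_ * ?_
          · exact Real.rpow_le_rpow hyx.le (by linarith) hγκ
          · exact Real.rpow_le_rpow_of_nonpos hx1' (by linarith) (by linarith)
  have e : (1 - x) ^ (-(2 * κ)) = ((1 - x) ^ (-κ)) ^ 2 := by
    rw [← Real.rpow_natCast ((1 - x) ^ (-κ)) 2, ← Real.rpow_mul hx1'.le]
    push_cast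
    ring_nf
  calc x ^ (2 * α) * (y ^ β * (y - x) ^ γ) ^ 2
      ≤ x ^ (2 * α) * (2 ^ |β| * (2 ^ (γ + κ) * (1 - x) ^ (-κ))) ^ 2 := by gcongr
    _ = _ := by rw [e]; ring

lemma stronglyMeasurable_rpow_mul_kernelIntegral_sq (α β γ t : ℝ) :
    StronglyMeasurable fun x : ℝ =>
      x ^ (2 * α) * (t ^ (-(β + γ)) * kernelIntegral β γ t (t + 1) (t * x)) ^ 2 := by
  have h : StronglyMeasurable fun s => kernelIntegral β γ t (t + 1) s :=
    stronglyMeasurable_kernelIntegral β γ measurable_const measurable_const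
  exact (measurable_id.pow_const (2 * α)).stronglyMeasurable.mul
    (((h.comp_measurable (measurable_const_mul t)).const_mul _).pow 2)

lemma intervalIntegrable_rpow_mul_kernelIntegral_sq {α β γ t : ℝ} (hα : -(1 / 2 : ℝ) < α)
    (hγ : -(1 / 2 : ℝ) < γ) (ht : 1 ≤ t) :
    IntervalIntegrable (fun x : ℝ => x ^ (2 * α) *
      (t ^ (-(β + γ)) * kernelIntegral β γ t (t + 1) (t * x)) ^ 2) volume 0 1 := by
  have hκ : max 0 (-γ) < 1 / 2 := max_lt (by norm_num) (by linarith)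
  refine ((intervalIntegrable_rpow_mul_one_sub_rpow (a := 2 * α) (b := -(2 * max 0 (-γ)))
    (by linarith) (by linarith)).const_mul ((2 ^ |β| * 2 ^ (γ + max 0 (-γ))) ^ 2)).mono_fun'
    (stronglyMeasurable_rpow_mul_kernelIntegral_sq α β γ t).aestronglyMeasurable ?_
  rw [Set.uIoc_of_le zero_le_one]
  refine (ae_restrict_iff' measurableSet_Ioc).2 ?_
  filter_upwards [Measure.ae_ne volume (1 : ℝ)] with x hx1 hx
  exact rpow_mul_kernelIntegral_sq_le (le_max_left _ _) (by linarith [le_max_right 0 (-γ)]) ht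
    hx.1 (lt_of_le_of_ne hx.2 hx1)

lemma tendsto_integral_rpow_mul_kernelIntegral_sq {α β γ : ℝ} (hα : -(1 / 2 : ℝ) < α)
    (hγ : -(1 / 2 : ℝ) < γ) :
    Tendsto (fun t : ℝ => ∫ x in (0 : ℝ)..1, x ^ (2 * α) *
      (t ^ (-(β + γ)) * kernelIntegral β γ t (t + 1) (t * x)) ^ 2) atTop
      (nhds (∫ x in (0 : ℝ)..1, x ^ (2 * α) * (1 - x) ^ (2 * γ))) := by
  have hκ : max 0 (-γ) < 1 / 2 := max_lt (by norm_num) (by linarith)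
  refine intervalIntegral.tendsto_integral_filter_of_dominated_convergence _
    (Eventually.of_forall fun t =>
      (stronglyMeasurable_rpow_mul_kernelIntegral_sq α β γ t).aestronglyMeasurable) ?_
    ((intervalIntegrable_rpow_mul_one_sub_rpow (a := 2 * α) (b := -(2 * max 0 (-γ)))
      (by linarith) (by linarith)).const_mul ((2 ^ |β| * 2 ^ (γ + max 0 (-γ))) ^ 2)) ?_
  · filter_upwards [eventually_ge_atTop 1] with t ht
    rw [Set.uIoc_of_le zero_le_one]
    filter_upwards [Measure.ae_ne volume (1 : ℝ)] with x hx1 hx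
    exact rpow_mul_kernelIntegral_sq_le (le_max_left _ _) (by linarith [le_max_right 0 (-γ)]) ht
      hx.1 (lt_of_le_of_ne hx.2 hx1)
  · rw [Set.uIoc_of_le zero_le_one]
    filter_upwards [Measure.ae_ne volume (1 : ℝ)] with x hx1 hx
    have hx1' : x < 1 := lt_of_le_of_ne hx.2 hx1
    have h := ((tendsto_rpow_mul_kernelIntegral β γ (σ := fun t => t * x) hx1' ?_ ?_).pow
      2).const_mul (x ^ (2 * α))
    · rwa [← Real.rpow_mul_natCast (by linarith), Nat.cast_ofNat, mul_comm γ 2] at h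
    · refine tendsto_const_nhds.congr' ?_
      filter_upwards [eventually_gt_atTop 0] with t ht
      rw [mul_div_cancel_left₀ _ ht.ne']
    · filter_upwards [eventually_gt_atTop 0] with t ht
      nlinarith

lemma norm_rpow_mul_kernelIntegral_sq_le {α β γ t s : ℝ} (hγ : -1 < γ) (ht : 1 ≤ t)
    (hs1 : t ≤ s) (hs2 : s ≤ t + 1) :
    ‖s ^ (2 * α) * kernelIntegral β γ s (t + 1) s ^ 2‖ ≤
      2 ^ |2 * α| * (2 ^ |β| / (γ + 1)) ^ 2 * (t ^ (2 * α) * (t ^ β) ^ 2) := by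
  have ht0 : 0 < t := by linarith
  have hs0 : 0 < s := by linarith
  have hγ1 : 0 < γ + 1 := by linarith
  have h := norm_integral_le_of_norm_le (μ := volume) (f := fun u => u ^ β * (u - s) ^ γ)
    (g := fun u => (2 ^ |β| * t ^ β) * (u - s) ^ γ) hs2 (Eventually.of_forall fun u hu => by
      have h0 : 0 < u := hs0.trans hu.1
      have h1 : 0 < u - s := sub_pos.2 hu.1
      rw [Real.norm_of_nonneg (by positivity)]
      gcongr
      exact rpow_le_mul_rpow β ht (hs1.trans hu.1.le) hu.2)
    ((intervalIntegrable_sub_rpow s (t + 1) s hγ).const_mul _)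
  rw [intervalIntegral.integral_const_mul, integral_sub_rpow s (t + 1) hγ] at h
  have h1 : (t + 1 - s) ^ (γ + 1) ≤ 1 :=
    Real.rpow_le_one (by linarith) (by linarith) hγ1.le
  have h2 : |kernelIntegral β γ s (t + 1) s| ≤ (2 ^ |β| * t ^ β) * (1 / (γ + 1)) :=
    h.trans (by gcongr)
  have h3 : kernelIntegral β γ s (t + 1) s ^ 2 ≤ ((2 ^ |β| * t ^ β) * (1 / (γ + 1))) ^ 2 := by
    rw [← sq_abs]; gcongr
  rw [Real.norm_of_nonneg (by positivity)]
  calc _ ≤ (2 ^ |2 * α| * t ^ (2 * α)) * ((2 ^ |β| * t ^ β) * (1 / (γ + 1))) ^ 2 := by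
        gcongr
        exact rpow_le_mul_rpow _ ht hs1 hs2
    _ = _ := by ring

lemma rpow_mul_integral_eq {α β γ t : ℝ} (ht : 0 < t) :
    t ^ (-(2 * α + 2 * β + 2 * γ + 1)) *
        ∫ s in (0 : ℝ)..t, s ^ (2 * α) * kernelIntegral β γ t (t + 1) s ^ 2 =
      ∫ x in (0 : ℝ)..1, x ^ (2 * α) *
        (t ^ (-(β + γ)) * kernelIntegral β γ t (t + 1) (t * x)) ^ 2 := by
  have h := mul_integral_comp_mul_left (a := 0) (b := 1)
    (f := fun s => s ^ (2 * α) * kernelIntegral β γ t (t + 1) s ^ 2) t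
  rw [mul_zero, mul_one] at h
  rw [← h, ← mul_assoc, ← intervalIntegral.integral_const_mul]
  refine intervalIntegral.integral_congr fun x hx => ?_
  rw [Set.uIcc_of_le zero_le_one] at hx
  have e : t ^ (-(2 * α + 2 * β + 2 * γ + 1)) * t * t ^ (2 * α) = (t ^ (-(β + γ))) ^ 2 := by
    rw [← Real.rpow_natCast (t ^ (-(β + γ))) 2, ← Real.rpow_mul ht.le, ← Real.rpow_add_one ht.ne',
      ← Real.rpow_add ht]
    push_cast
    ring_nf
  rw [Real.mul_rpow ht.le hx.1, mul_pow, ← e]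
  ring

lemma tendsto_rpow_mul_variance {α β γ : ℝ} (hα : -(1 / 2 : ℝ) < α) (hγ : -(1 / 2 : ℝ) < γ) :
    Tendsto (fun t : ℝ => t ^ (-(2 * α + 2 * β + 2 * γ + 1)) * ∫ s in (0 : ℝ)..(t + 1),
        s ^ (2 * α) * kernelIntegral β γ (max s t) (t + 1) s ^ 2) atTop
      (nhds (∫ x in (0 : ℝ)..1, x ^ (2 * α) * (1 - x) ^ (2 * γ))) := by
  have hmeas : ∀ t, StronglyMeasurable fun s : ℝ =>
      s ^ (2 * α) * kernelIntegral β γ (max s t) (t + 1) s ^ 2 := fun t =>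
    (measurable_id.pow_const (2 * α)).stronglyMeasurable.mul
      ((stronglyMeasurable_kernelIntegral β γ (measurable_id.max measurable_const)
        measurable_const).pow 2)
  set M : ℝ := 2 ^ |2 * α| * (2 ^ |β| / (γ + 1)) ^ 2
  have hbound : ∀ t : ℝ, 1 ≤ t → ∀ s ∈ Set.uIoc t (t + 1),
      ‖s ^ (2 * α) * kernelIntegral β γ (max s t) (t + 1) s ^ 2‖ ≤
        M * (t ^ (2 * α) * (t ^ β) ^ 2) := by
    intro t ht s hs
    rw [Set.uIoc_of_le (by linarith)] at hs
    rw [max_eq_left hs.1.le]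
    exact norm_rpow_mul_kernelIntegral_sq_le (by linarith) ht hs.1.le hs.2
  have hfirst : ∀ t : ℝ, Set.EqOn
      (fun s => s ^ (2 * α) * kernelIntegral β γ (max s t) (t + 1) s ^ 2)
      (fun s => s ^ (2 * α) * kernelIntegral β γ t (t + 1) s ^ 2) (Set.Iic t) := by
    intro t s hs
    simp only [max_eq_right (Set.mem_Iic.1 hs)]
  have hzero : Tendsto (fun t : ℝ => t ^ (-(2 * α + 2 * β + 2 * γ + 1)) * ∫ s in t..(t + 1),
      s ^ (2 * α) * kernelIntegral β γ (max s t) (t + 1) s ^ 2) atTop (nhds 0) := by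
    have h0 : Tendsto (fun t : ℝ => M * t ^ (-(2 * γ + 1))) atTop (nhds 0) := by
      simpa using (tendsto_rpow_neg_atTop (by linarith : 0 < 2 * γ + 1)).const_mul M
    refine squeeze_zero_norm' ?_ h0
    filter_upwards [eventually_ge_atTop 1] with t ht
    have ht0 : 0 < t := by linarith
    have h := norm_integral_le_of_norm_le_const (hbound t ht)
    rw [add_sub_cancel_left, abs_one, mul_one] at h
    rw [norm_mul, Real.norm_of_nonneg (by positivity)]
    calc _ ≤ t ^ (-(2 * α + 2 * β + 2 * γ + 1)) * (M * (t ^ (2 * α) * (t ^ β) ^ 2)) := by gcongr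
      _ = M * (t ^ (-(2 * α + 2 * β + 2 * γ + 1)) * (t ^ (2 * α) * (t ^ β) ^ 2)) := by ring
      _ = M * t ^ (-(2 * γ + 1)) := by
        rw [← Real.rpow_natCast (t ^ β) 2, ← Real.rpow_mul ht0.le, ← Real.rpow_add ht0,
          ← Real.rpow_add ht0]
        push_cast
        ring_nf
  have hsum := (tendsto_integral_rpow_mul_kernelIntegral_sq (β := β) hα hγ).add hzero
  rw [add_zero] at hsum
  refine hsum.congr' ?_
  filter_upwards [eventually_ge_atTop 1] with t ht
  have ht0 : 0 < t := by linarith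
  have hint1 : IntervalIntegrable
      (fun s => s ^ (2 * α) * kernelIntegral β γ t (t + 1) s ^ 2) volume 0 t := by
    rw [← IntervalIntegrable.comp_mul_left_iff ht0.ne', zero_div, div_self ht0.ne']
    have h := (intervalIntegrable_rpow_mul_kernelIntegral_sq (β := β) hα hγ ht).const_mul
      (t ^ (2 * α) * (t ^ (β + γ)) ^ 2)
    refine h.congr fun x hx => ?_
    rw [Set.uIoc_of_le zero_le_one] at hx
    rw [Real.mul_rpow ht0.le hx.1.le, Real.rpow_neg ht0.le]
    have := Real.rpow_pos_of_pos ht0 (β + γ)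
    field_simp
  have hint1' : IntervalIntegrable
      (fun s => s ^ (2 * α) * kernelIntegral β γ (max s t) (t + 1) s ^ 2) volume 0 t := by
    refine hint1.congr fun s hs => ?_
    rw [Set.uIoc_of_le ht0.le] at hs
    exact (hfirst t hs.2).symm
  have hint2 : IntervalIntegrable
      (fun s => s ^ (2 * α) * kernelIntegral β γ (max s t) (t + 1) s ^ 2) volume t (t + 1) := by
    refine (intervalIntegrable_const (c := M * (t ^ (2 * α) * (t ^ β) ^ 2))).mono_fun'
      (hmeas t).aestronglyMeasurable ?_
    exact (ae_restrict_iff' measurableSet_uIoc).2 (Eventually.of_forall (hbound t ht))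
  rw [← integral_add_adjacent_intervals hint1' hint2, mul_add, ← rpow_mul_integral_eq ht0]
  congr 2
  refine intervalIntegral.integral_congr fun s hs => ?_
  rw [Set.uIcc_of_le ht0.le] at hs
  exact (hfirst t hs.2).symm

/-- Theorem 3.5, case `γ > -1/2`: asymptotics of the correlation
`corr(X₁, X_{t+1} - X_t)` of the Gaussian Volterra process. -/
theorem stmt_9 (α β γ : ℝ) (hα : -(1/2 : ℝ) < α)
    (hαβγ : -(3/2 : ℝ) < α + β + γ) (hγ' : -(1/2 : ℝ) < γ)
    (F V r : ℝ → ℝ) (C : ℝ)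
    (hF : ∀ t : ℝ, F t = ∫ s in (0:ℝ)..1, s ^ (2*α) *
      (∫ u in s..1, u ^ β * (u - s) ^ γ) *
      (∫ v in t..(t+1), v ^ β * (v - s) ^ γ))
    (hV : ∀ t : ℝ, V t = ∫ s in (0:ℝ)..(t+1), s ^ (2*α) *
      (∫ u in (max s t)..(t+1), u ^ β * (u - s) ^ γ) ^ 2)
    (hC : C = ∫ s in (0:ℝ)..1, s ^ (2*α) *
      (∫ u in s..1, u ^ β * (u - s) ^ γ) ^ 2)
    (hr : ∀ t : ℝ, r t = F t / (Real.sqrt C * Real.sqrt (V t))) :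
    ∃ c : ℝ, 0 < c ∧
      Tendsto (fun t : ℝ => t ^ (α + 1/2) * r t) atTop (nhds c) := by
  have hγ : -1 < γ := by linarith
  have hCint := intervalIntegrable_rpow_mul_kernelIntegral_one_sq hα hαβγ hγ
  have hpos : ∀ s ∈ Set.Ioo (0 : ℝ) 1, 0 < kernelIntegral β γ s 1 s := fun s hs =>
    kernelIntegral_pos hγ hs.1 le_rfl hs.2
  have hC0 : 0 < C := by
    rw [hC]
    exact intervalIntegral_pos_of_pos_on hCint (fun s hs =>
      mul_pos (Real.rpow_pos_of_pos hs.1 _) (pow_pos (hpos s hs) 2)) one_pos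
  have hA0 : 0 < ∫ s in (0 : ℝ)..1, s ^ (2 * α) * kernelIntegral β γ s 1 s :=
    intervalIntegral_pos_of_pos_on (intervalIntegrable_rpow_mul_kernelIntegral_one hα hαβγ hγ)
      (fun s hs => mul_pos (Real.rpow_pos_of_pos hs.1 _) (hpos s hs)) one_pos
  have hK0 : 0 < ∫ x in (0 : ℝ)..1, x ^ (2 * α) * (1 - x) ^ (2 * γ) :=
    intervalIntegral_pos_of_pos_on
      (intervalIntegrable_rpow_mul_one_sub_rpow (by linarith) (by linarith))
      (fun x hx => mul_pos (Real.rpow_pos_of_pos hx.1 _)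
        (Real.rpow_pos_of_pos (sub_pos.2 hx.2) _)) one_pos
  refine ⟨_, div_pos hA0 (mul_pos (Real.sqrt_pos.2 hC0) (Real.sqrt_pos.2 hK0)), ?_⟩
  have hlim := (tendsto_rpow_mul_covariance hα hαβγ hγ).div
    (((Real.continuous_sqrt.tendsto _).comp
      (tendsto_rpow_mul_variance (β := β) hα hγ')).const_mul (Real.sqrt C))
    (mul_pos (Real.sqrt_pos.2 hC0) (Real.sqrt_pos.2 hK0)).ne'
  refine hlim.congr' ?_
  filter_upwards [eventually_gt_atTop 0] with t ht
  have e : Real.sqrt (t ^ (-(2 * α + 2 * β + 2 * γ + 1))) =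
      t ^ (-(β + γ)) / t ^ (α + 1 / 2) := by
    rw [Real.sqrt_eq_rpow, ← Real.rpow_mul ht.le, ← Real.rpow_sub ht]
    ring_nf
  have hFV : ∀ a b : ℝ, t ^ (-(β + γ)) * a /
      (Real.sqrt C * Real.sqrt (t ^ (-(2 * α + 2 * β + 2 * γ + 1)) * b)) =
      t ^ (α + 1 / 2) * (a / (Real.sqrt C * Real.sqrt b)) := by
    intro a b
    rw [Real.sqrt_mul (by positivity), e]
    have h1 := Real.rpow_pos_of_pos ht (-(β + γ))
    have h2 := Real.rpow_pos_of_pos ht (α + 1 / 2)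
    field_simp
  rw [hr, hF, hV]
  exact hFV _ _
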